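/- Let λ > 0, ω > 0, and Δt > 0 with λ Δt < 2, let M ≥ 3 be a positive integer with M Δt = 2π/ω =: T, and let f, ν ∈ ℝ. Define λ̃ := (2/Δt) arcsin(λ Δt/2), ω̃ := sin(ω Δt/2)/(Δt/2), assume ω̃ ≠ λ, set ν^∞ := ω f/(ω̃² − λ²), and let u^n := (ν − ν^∞) cos(λ̃ n Δt) + ν^∞ cos(ω n Δt). Define the trapezoidal weights η_0 = η_M = 1/2 and η_n = 1 for 0 < n < M, and the discrete filter transfer function β_h(μ) := (2Δt/T) Σ_{n=0}^{M} η_n cos(μ n Δt)(cos(ω n Δt) − 1/4). Then (2Δt/T) Σ_{n=0}^{M} η_n (cos(ω n Δt) − 1/4) u^n = β_h(λ̃)(ν − ν^∞) + ν^∞. -/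

import Mathlib

open Real Finset

/-!
The filter is linear in the sequence it averages, so it scales the transient amplitude by the value
of the filter on a unit mode, and it remains to see that it maps the mode `cos (ω n Δt)` to `1`.
The sampled integrand has period `M`, so its trapezoidal sum is a plain sum over one period. Since
`cos² x = (1 + cos 2x) / 2`, that sum equals `M / 2` as soon as the sampled frequencies `ω` and `2ω`
do not alias to zero, that is, as soon as `M` divides neither `1` nor `2`.
-/

theorem sum_range_cos_eq_zero {M : ℕ} {k : ℤ} {x : ℝ} (hk : ¬ (M : ℤ) ∣ k)
    (hx : M * x = k * (2 * π)) (b : ℝ) : ∑ n ∈ range M, cos (x * n + b) = 0 := by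
  have hx_ne (j : ℤ) : x ≠ j * (2 * π) := by
    rintro rfl
    have hkj : (k : ℝ) = M * j :=
      mul_right_cancel₀ two_pi_pos.ne' (by rw [← hx, mul_assoc])
    exact hk ⟨j, by exact_mod_cast hkj⟩
  have hsin : sin (M * x / 2) = 0 := by
    rw [hx, mul_left_comm, mul_div_cancel_left₀ _ two_ne_zero, sin_int_mul_pi]
  rw [sum_cos M hx_ne, hsin, zero_mul, zero_div]

theorem sum_range_cos_sub_mul_cos {M : ℕ} {k : ℤ} {x : ℝ} (hk : ¬ (M : ℤ) ∣ 2 * k)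
    (hx : M * x = k * (2 * π)) (c : ℝ) :
    ∑ n ∈ range M, (cos (x * n) - c) * cos (x * n) = M / 2 := by
  have hcos : ∑ n ∈ range M, cos (x * n) = 0 := by
    simpa only [add_zero] using sum_range_cos_eq_zero (fun h ↦ hk (h.mul_left 2)) hx 0
  have hcos_two : ∑ n ∈ range M, cos (2 * x * n) = 0 := by
    have h2x : M * (2 * x) = (2 * k : ℤ) * (2 * π) := by
      push_cast
      linear_combination 2 * hx
    simpa only [add_zero] using sum_range_cos_eq_zero hk h2x 0
  calc ∑ n ∈ range M, (cos (x * n) - c) * cos (x * n)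
      = ∑ n ∈ range M, (1 / 2 + 1 / 2 * cos (2 * x * n) - c * cos (x * n)) := by
        refine sum_congr rfl fun n _ ↦ ?_
        rw [mul_assoc 2, cos_two_mul]
        ring
    _ = M / 2 := by
        rw [sum_sub_distrib, sum_add_distrib, ← mul_sum, ← mul_sum, hcos, hcos_two, sum_const,
          card_range, nsmul_eq_mul]
        ring

/-- The weights `η_n` of the composite trapezoidal rule with nodes `0, …, M`, in units of the step
size. They are not cut off for `n > M`. -/
noncomputable def trapezoidWeight (M n : ℕ) : ℝ :=
  if n = 0 ∨ n = M then 1 / 2 else 1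

theorem sum_trapezoidWeight_smul_of_eq {E : Type*} [AddCommMonoid E] [Module ℝ E] {M : ℕ}
    (hM : M ≠ 0) {g : ℕ → E} (hg : g M = g 0) :
    ∑ n ∈ range (M + 1), trapezoidWeight M n • g n = ∑ n ∈ range M, g n := by
  obtain ⟨m, rfl⟩ := Nat.exists_eq_succ_of_ne_zero hM
  have hinterior : ∑ n ∈ range m, trapezoidWeight (m + 1) (n + 1) • g (n + 1) =
      ∑ n ∈ range m, g (n + 1) := by
    refine sum_congr rfl fun n hn ↦ ?_
    have hnm : n ≠ m := (mem_range.mp hn).ne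
    simp [trapezoidWeight, hnm]
  have hends : trapezoidWeight (m + 1) 0 • g 0 + trapezoidWeight (m + 1) (m + 1) • g (m + 1) =
      g 0 := by
    simp [trapezoidWeight, hg, ← add_smul, ← two_mul]
  rw [sum_range_succ, sum_range_succ', hinterior, add_assoc, hends, sum_range_succ' g]

/-- The discrete mode `n ↦ cos (μ n Δt)` of frequency `μ`. -/
noncomputable def cosMode (Δt μ : ℝ) (n : ℕ) : ℝ :=
  cos (μ * n * Δt)

/-- The trapezoidal discretization of the WaveHoltz filter
`v ↦ (2 / T) ∫₀ᵀ (cos (ω t) - 1 / 4) v t dt` with `T = 2π / ω`, as a linear functional on sequences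
of time samples. It approximates the integral when `M * Δt = T`. -/
noncomputable def waveHoltzFilter (ω Δt : ℝ) (M : ℕ) : (ℕ → ℝ) →ₗ[ℝ] ℝ :=
  (2 * Δt / (2 * π / ω)) • ∑ n ∈ range (M + 1),
    (trapezoidWeight M n * (cosMode Δt ω n - 1 / 4)) • LinearMap.proj n

/-- The transfer function `β_h(μ)` of the discrete filter: its value on the unit mode of
frequency `μ`. -/
noncomputable def filterTransfer (ω Δt : ℝ) (M : ℕ) (μ : ℝ) : ℝ :=
  waveHoltzFilter ω Δt M (cosMode Δt μ)

theorem waveHoltzFilter_apply (ω Δt : ℝ) (M : ℕ) (v : ℕ → ℝ) :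
    waveHoltzFilter ω Δt M v = 2 * Δt / (2 * π / ω) *
      ∑ n ∈ range (M + 1), trapezoidWeight M n * (cosMode Δt ω n - 1 / 4) * v n := by
  simp [waveHoltzFilter]

theorem filterTransfer_self {ω Δt : ℝ} (hω : ω ≠ 0) {M : ℕ} (hM : 3 ≤ M)
    (hT : M * Δt = 2 * π / ω) : filterTransfer ω Δt M ω = 1 := by
  have hM0 : M ≠ 0 := by lia
  have hperiod : M * (ω * Δt) = (1 : ℤ) * (2 * π) := by
    rw [mul_left_comm, hT, Int.cast_one, one_mul, mul_div_cancel₀ _ hω]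
  have hndvd : ¬ (M : ℤ) ∣ 2 * 1 := fun h ↦ by
    have hM_le : (M : ℤ) ≤ 2 * 1 := Int.le_of_dvd (by norm_num) h
    lia
  have hends : cosMode Δt ω M = cosMode Δt ω 0 := by
    have hphase : ω * M * Δt = 2 * π := by linear_combination hperiod
    simp [cosMode, hphase]
  have hsum : ∑ n ∈ range (M + 1),
      trapezoidWeight M n * (cosMode Δt ω n - 1 / 4) * cosMode Δt ω n = M / 2 := by
    calc ∑ n ∈ range (M + 1), trapezoidWeight M n * (cosMode Δt ω n - 1 / 4) * cosMode Δt ω n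
        = ∑ n ∈ range M, (cosMode Δt ω n - 1 / 4) * cosMode Δt ω n := by
          simpa only [smul_eq_mul, mul_assoc] using sum_trapezoidWeight_smul_of_eq hM0
            (g := fun n ↦ (cosMode Δt ω n - 1 / 4) * cosMode Δt ω n) (by rw [hends])
      _ = M / 2 := by
          simpa only [cosMode, mul_right_comm ω] using
            sum_range_cos_sub_mul_cos hndvd hperiod (1 / 4)
  have hΔt : Δt ≠ 0 := by
    rintro rfl
    simp [pi_ne_zero] at hperiod
  rw [filterTransfer, waveHoltzFilter_apply, hsum, ← hT]
  field_simp

theorem discrete_filter_on_mode_general {ω Δt : ℝ} (hω : ω ≠ 0) {M : ℕ} (hM : 3 ≤ M)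
    (hT : M * Δt = 2 * π / ω) (μ a b : ℝ) :
    waveHoltzFilter ω Δt M (a • cosMode Δt μ + b • cosMode Δt ω) =
      filterTransfer ω Δt M μ * a + b := by
  have hsteady : waveHoltzFilter ω Δt M (cosMode Δt ω) = 1 := filterTransfer_self hω hM hT
  rw [map_add, map_smul, map_smul, hsteady, smul_eq_mul, smul_eq_mul, mul_one, mul_comm,
    filterTransfer]

/-- Action of the trapezoidal discretization of the WaveHoltz filter on a single
discrete leapfrog mode: the steady component `ν^∞` is reproduced exactly and the
transient component `ν - ν^∞` is multiplied by the filter factor `β_h(λ̃)`. -/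
theorem discrete_filter_on_mode
    (lam ω Δt : ℝ) (hlam : 0 < lam) (hω : 0 < ω) (hΔt : 0 < Δt)
    (hcfl : lam * Δt < 2)
    (M : ℕ) (hM : 3 ≤ M) (hT : (M : ℝ) * Δt = 2 * π / ω)
    (f ν : ℝ)
    (lamt : ℝ) (hlamt : lamt = (2 / Δt) * Real.arcsin (lam * Δt / 2))
    (ωt : ℝ) (hωt : ωt = Real.sin (ω * Δt / 2) / (Δt / 2))
    (hne : ωt ≠ lam)
    (νinf : ℝ) (hνinf : νinf = ω * f / (ωt ^ 2 - lam ^ 2))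
    (u : ℕ → ℝ)
    (hu : ∀ n : ℕ, u n = (ν - νinf) * Real.cos (lamt * n * Δt)
      + νinf * Real.cos (ω * n * Δt))
    (η : ℕ → ℝ) (hη : ∀ n, η n = if n = 0 ∨ n = M then (1 / 2 : ℝ) else 1)
    (βh : ℝ → ℝ)
    (hβh : ∀ μ, βh μ = (2 * Δt / (2 * π / ω)) *
      ∑ n ∈ Finset.range (M + 1),
        η n * Real.cos (μ * n * Δt) * (Real.cos (ω * n * Δt) - 1 / 4)) :
    (2 * Δt / (2 * π / ω)) *
      ∑ n ∈ Finset.range (M + 1),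
        η n * (Real.cos (ω * n * Δt) - 1 / 4) * u n
      = βh lamt * (ν - νinf) + νinf := by
  obtain rfl : η = trapezoidWeight M := funext hη
  simpa [waveHoltzFilter_apply, filterTransfer, cosMode, hu, hβh, mul_right_comm] using
    discrete_filter_on_mode_general hω.ne' hM hT lamt (ν - νinf) νinf
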